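/- For every integer d ≥ 1 and every real m ∈ [0, 1], it holds that 1 − g_d(m) ≤ (p_d·2^d/(d+1))·(1 − m)^{d+1}. -/

import Mathlib

noncomputable def g (d : ℕ) : ℝ → ℝ :=
  fun m => ∑ i ∈ Finset.range (d + 1),
    (1 / 4 ^ i : ℝ) * (Nat.choose (2 * i) i) * (m * (1 - m ^ 2) ^ i)

noncomputable def p (d : ℕ) : ℝ :=
  ∑ i ∈ Finset.range (d + 1), (1 / 4 ^ i : ℝ) * (Nat.choose (2 * i) i)

/-! The derivative of `g d` telescopes to the single term `p d * (1 - x ^ 2) ^ d`, and `g d 1 = 1`,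
so `1 - g d m = p d * ∫ x in m..1, (1 - x ^ 2) ^ d`. Since `|1 + x| ≤ 2` on
`[-3, 1]`, the integrand `(1 + x) ^ d * (1 - x) ^ d` is at most `2 ^ d * (1 - x) ^ d`. -/

/-- The coefficient `C(2i, i) / 4 ^ i` shared by `g` and `p`, spelled as in their
definitions so that it unfolds to the same terms. -/
noncomputable def scaledCentralBinom (i : ℕ) : ℝ := (1 / 4 ^ i : ℝ) * (Nat.choose (2 * i) i)

lemma two_mul_succ_mul_scaledCentralBinom_succ (i : ℕ) :
    2 * ((i : ℝ) + 1) * scaledCentralBinom (i + 1) = (2 * i + 1) * scaledCentralBinom i := by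
  have centralBinom_rec : ((i : ℝ) + 1) * (Nat.choose (2 * (i + 1)) (i + 1) : ℝ)
      = 2 * (2 * i + 1) * (Nat.choose (2 * i) i : ℝ) :=
    mod_cast Nat.succ_mul_centralBinom_succ i
  simp only [scaledCentralBinom, pow_succ]
  field_simp
  linear_combination 2 * centralBinom_rec

lemma p_zero : p 0 = 1 := by simp [p]

lemma p_succ (d : ℕ) : p (d + 1) = p d + scaledCentralBinom (d + 1) :=
  Finset.sum_range_succ scaledCentralBinom (d + 1)

lemma p_nonneg (d : ℕ) : 0 ≤ p d :=
  Finset.sum_nonneg fun _ _ => by positivity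

lemma p_eq_two_mul_succ_mul_scaledCentralBinom_succ (d : ℕ) :
    p d = 2 * (d + 1) * scaledCentralBinom (d + 1) := by
  induction d with
  | zero => norm_num [p_zero, scaledCentralBinom]
  | succ d ih =>
    rw [two_mul_succ_mul_scaledCentralBinom_succ, p_succ, ih]
    push_cast
    ring

lemma g_zero : g 0 = id := by
  ext x
  simp [g]

lemma g_succ (d : ℕ) :
    g (d + 1) = fun x => g d x + scaledCentralBinom (d + 1) * (x * (1 - x ^ 2) ^ (d + 1)) :=
  funext fun x =>
    Finset.sum_range_succ (fun i => scaledCentralBinom i * (x * (1 - x ^ 2) ^ i)) (d + 1)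

lemma g_apply_one (d : ℕ) : g d 1 = 1 := by
  induction d with
  | zero => simp [g_zero]
  | succ d ih => simp [g_succ, ih]

lemma hasDerivAt_mul_one_sub_sq_pow_succ (n : ℕ) (x : ℝ) :
    HasDerivAt (fun y : ℝ => y * (1 - y ^ 2) ^ (n + 1))
      ((1 - x ^ 2) ^ (n + 1) - 2 * (n + 1) * x ^ 2 * (1 - x ^ 2) ^ n) x := by
  have hbase : HasDerivAt (fun y : ℝ => 1 - y ^ 2) (-(2 * x)) x := by
    simpa using (hasDerivAt_pow 2 x).const_sub 1
  refine ((hasDerivAt_id' x).fun_mul (hbase.fun_pow (n + 1))).congr_deriv ?_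
  simp only [Nat.add_sub_cancel]
  push_cast
  ring

lemma hasDerivAt_g (d : ℕ) (x : ℝ) : HasDerivAt (g d) (p d * (1 - x ^ 2) ^ d) x := by
  induction d with
  | zero => simpa [g_zero, p_zero] using hasDerivAt_id x
  | succ d ih =>
    rw [g_succ]
    refine (ih.fun_add ((hasDerivAt_mul_one_sub_sq_pow_succ d x).const_mul
      (scaledCentralBinom (d + 1)))).congr_deriv ?_
    -- `p d = 2 * (d + 1) * c` combines the old derivative with the `x ^ 2` term into a multiple of
    -- `(1 - x ^ 2) ^ (d + 1)`.
    rw [p_succ, p_eq_two_mul_succ_mul_scaledCentralBinom_succ]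
    ring

lemma one_sub_g_eq_integral (d : ℕ) (m : ℝ) :
    1 - g d m = p d * ∫ x in m..1, (1 - x ^ 2) ^ d := by
  have ftc : ∫ x in m..1, p d * (1 - x ^ 2) ^ d = g d 1 - g d m :=
    intervalIntegral.integral_eq_sub_of_hasDerivAt (fun x _ => hasDerivAt_g d x)
      (Continuous.intervalIntegrable (by fun_prop) _ _)
  rw [← intervalIntegral.integral_const_mul, ftc, g_apply_one]

lemma integral_sub_left_pow (a m : ℝ) (n : ℕ) :
    ∫ x in m..a, (a - x) ^ n = (a - m) ^ (n + 1) / (n + 1) := by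
  rw [intervalIntegral.integral_comp_sub_left (fun y => y ^ n), integral_pow]
  simp

lemma one_sub_sq_pow_le {x : ℝ} (hx : x ∈ Set.Icc (-3 : ℝ) 1) (n : ℕ) :
    (1 - x ^ 2) ^ n ≤ 2 ^ n * (1 - x) ^ n := by
  have abs_one_add_le : |1 + x| ≤ 2 := abs_le.2 ⟨by linarith [hx.1], by linarith [hx.2]⟩
  have one_sub_nonneg : 0 ≤ 1 - x := sub_nonneg.2 hx.2
  calc (1 - x ^ 2) ^ n = (1 + x) ^ n * (1 - x) ^ n := by rw [← mul_pow]; ring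
    _ ≤ |1 + x| ^ n * (1 - x) ^ n := by
      rw [← abs_pow]
      gcongr
      exact le_abs_self _
    _ ≤ 2 ^ n * (1 - x) ^ n := by gcongr

lemma integral_one_sub_sq_pow_le {m : ℝ} (hm : m ∈ Set.Icc (-3 : ℝ) 1) (n : ℕ) :
    ∫ x in m..1, (1 - x ^ 2) ^ n ≤ 2 ^ n * ((1 - m) ^ (n + 1) / (n + 1)) := by
  rw [← integral_sub_left_pow, ← intervalIntegral.integral_const_mul]
  exact intervalIntegral.integral_mono_on hm.2
    (Continuous.intervalIntegrable (by fun_prop) _ _)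
    (Continuous.intervalIntegrable (by fun_prop) _ _)
    fun x hx => one_sub_sq_pow_le ⟨hm.1.trans hx.1, hx.2⟩ n

theorem stmt_5_general (d : ℕ) {m : ℝ} (hm : m ∈ Set.Icc (-3 : ℝ) 1) :
    1 - g d m ≤ (p d * 2 ^ d / (d + 1)) * (1 - m) ^ (d + 1) :=
  calc 1 - g d m = p d * ∫ x in m..1, (1 - x ^ 2) ^ d := one_sub_g_eq_integral d m
    _ ≤ p d * (2 ^ d * ((1 - m) ^ (d + 1) / (d + 1))) :=
      mul_le_mul_of_nonneg_left (integral_one_sub_sq_pow_le hm d) (p_nonneg d)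
    _ = (p d * 2 ^ d / (d + 1)) * (1 - m) ^ (d + 1) := by ring

theorem stmt_5 (d : ℕ) (hd : 1 ≤ d) (m : ℝ) (hm : m ∈ Set.Icc (0 : ℝ) 1) :
    1 - g d m ≤ (p d * 2 ^ d / (d + 1)) * (1 - m) ^ (d + 1) :=
  stmt_5_general d ⟨by linarith [hm.1], hm.2⟩
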